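/- Let A = U · [[T, S], [0, 0]] · U* be an n×n complex matrix, where U is unitary and T is an invertible r×r matrix (so rank(A²) = rank(A) = r). Write U* G U = [[Ĝ₁, Ĝ₂], [Ĝ₃, Ĝ₄]] with Ĝ₁ of size r×r. Then A has an m-core inverse if and only if Ĝ₁ is invertible, and in that case the m-core inverse of A is U · [[T⁻¹ Ĝ₁⁻¹, 0], [0, 0]] · U* · G. -/

import Mathlib

/-!
In the unitary basis `U` everything becomes a statement about blocks: `A`, `G` turn into
`N = [[T, S], [0, 0]]` and `H = [[G₁, G₂], [G₃, G₄]]`, where `H` is Hermitian with `H * H = 1`.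
The change of basis `blockConj` is a bijective `*`-homomorphism, so an m-core inverse of `A` is the same
as a `Y` with `N Y N = N`, `N Y² = Y` and `H (N Y)ᴴ H = N Y`.

If such a `Y` exists, then `N Y² = Y` kills its lower blocks and `N Y N = N` forces its upper left
block to be `T⁻¹`, so that `N Y = [[1, V], [0, 0]]` for some `V`. Symmetry of `H N Y` gives
`G₂ = G₁ V`, and the upper left block of `H * H = 1` reads `G₁ (G₁ + V G₃) = 1`, so `G₁` is
invertible. Conversely, if `G₁` is invertible then `Y = [[T⁻¹ G₁⁻¹, 0], [0, 0]] H` satisfies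
`N Y = [[1, G₁⁻¹ G₂], [0, 0]]`, and `H N Y = H [[G₁⁻¹, 0], [0, 0]] H` is Hermitian.
-/

open Matrix

noncomputable section

/-- The Minkowski metric matrix `G = diag(1, -1, …, -1)`. -/
def mink (n : ℕ) : Matrix (Fin n) (Fin n) ℂ :=
  Matrix.diagonal (fun i => if (i : ℕ) = 0 then 1 else -1)

/-- The Minkowski adjoint `A~ = G A* G`. -/
def madj {n : ℕ} (A : Matrix (Fin n) (Fin n) ℂ) : Matrix (Fin n) (Fin n) ℂ :=
  mink n * Aᴴ * mink n

/-- `k` is the index of `A`: the smallest positive integer with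
`rank (A^(k+1)) = rank (A^k)`. -/
def IsInd {n : ℕ} (A : Matrix (Fin n) (Fin n) ℂ) (k : ℕ) : Prop :=
  0 < k ∧ (A ^ (k + 1)).rank = (A ^ k).rank ∧
    ∀ j, 0 < j → (A ^ (j + 1)).rank = (A ^ j).rank → k ≤ j

/-- `X` is an m-core-EP inverse of `A` (with `Ind(A) = k`). -/
def IsMCoreEP {n : ℕ} (A X : Matrix (Fin n) (Fin n) ℂ) (k : ℕ) : Prop :=
  X * A * X = X ∧ X * A ^ (k + 1) = A ^ k ∧ madj (A * X) = A * X ∧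
    ∃ Z : Matrix (Fin n) (Fin n) ℂ, X = A ^ k * Z

/-- `Y` is an m-core inverse of `B`. -/
def IsMCore {n : ℕ} (B Y : Matrix (Fin n) (Fin n) ℂ) : Prop :=
  B * Y * B = B ∧ B * Y ^ 2 = Y ∧ madj (B * Y) = B * Y

/-- Regard a 2×2 block matrix with blocks of sizes `r` and `n - r` as an
`n × n` matrix (given `r ≤ n`). -/
def embedBlocks {n r : ℕ} (hr : r ≤ n)
    (M : Matrix (Fin r ⊕ Fin (n - r)) (Fin r ⊕ Fin (n - r)) ℂ) :
    Matrix (Fin n) (Fin n) ℂ :=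
  Matrix.reindex (finSumFinEquiv.trans (finCongr (Nat.add_sub_cancel' hr)))
    (finSumFinEquiv.trans (finCongr (Nat.add_sub_cancel' hr))) M

/-- The matrix `U M U*`, where `M` is regarded as an `n × n` matrix via `embedBlocks`. -/
def blockConj {n r : ℕ} (hr : r ≤ n) (U : Matrix (Fin n) (Fin n) ℂ)
    (M : Matrix (Fin r ⊕ Fin (n - r)) (Fin r ⊕ Fin (n - r)) ℂ) : Matrix (Fin n) (Fin n) ℂ :=
  U * embedBlocks hr M * Uᴴ

lemma embedBlocks_mul {n r : ℕ} (hr : r ≤ n)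
    (M N : Matrix (Fin r ⊕ Fin (n - r)) (Fin r ⊕ Fin (n - r)) ℂ) :
    embedBlocks hr (M * N) = embedBlocks hr M * embedBlocks hr N :=
  map_mul (Matrix.reindexAlgEquiv ℂ ℂ _) M N

lemma blockConj_mul {n r : ℕ} (hr : r ≤ n) {U : Matrix (Fin n) (Fin n) ℂ} (hU : Uᴴ * U = 1)
    (M N : Matrix (Fin r ⊕ Fin (n - r)) (Fin r ⊕ Fin (n - r)) ℂ) :
    blockConj hr U M * blockConj hr U N = blockConj hr U (M * N) := by
  have h : U * embedBlocks hr M * Uᴴ * (U * embedBlocks hr N * Uᴴ)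
      = U * embedBlocks hr M * (Uᴴ * U) * embedBlocks hr N * Uᴴ := by
    simp only [Matrix.mul_assoc]
  rw [blockConj, blockConj, blockConj, h, hU, embedBlocks_mul]
  simp only [Matrix.mul_assoc, Matrix.one_mul]

lemma blockConj_conjTranspose {n r : ℕ} (hr : r ≤ n) (U : Matrix (Fin n) (Fin n) ℂ)
    (M : Matrix (Fin r ⊕ Fin (n - r)) (Fin r ⊕ Fin (n - r)) ℂ) :
    (blockConj hr U M)ᴴ = blockConj hr U Mᴴ := by
  simp [blockConj, embedBlocks, Matrix.conjTranspose_mul, Matrix.mul_assoc]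

lemma blockConj_one {n r : ℕ} (hr : r ≤ n) {U : Matrix (Fin n) (Fin n) ℂ} (hU : U * Uᴴ = 1) :
    blockConj hr U 1 = 1 := by
  have h : embedBlocks hr 1 = 1 := Matrix.submatrix_one_equiv _
  rw [blockConj, h, Matrix.mul_one, hU]

lemma blockConj_injective {n r : ℕ} (hr : r ≤ n) {U : Matrix (Fin n) (Fin n) ℂ} (hU : Uᴴ * U = 1) :
    Function.Injective (blockConj hr U) := by
  intro M N h
  have key : ∀ M, Uᴴ * blockConj hr U M * U = embedBlocks hr M := fun M => by
    have h : Uᴴ * (U * embedBlocks hr M * Uᴴ) * U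
        = (Uᴴ * U) * embedBlocks hr M * (Uᴴ * U) := by
      simp only [Matrix.mul_assoc]
    rw [blockConj, h, hU, Matrix.one_mul, Matrix.mul_one]
  have h2 : embedBlocks hr M = embedBlocks hr N := by rw [← key, ← key, h]
  exact (Matrix.reindex _ _).injective h2

lemma blockConj_eq_of_eq_embedBlocks {n r : ℕ} (hr : r ≤ n) {U : Matrix (Fin n) (Fin n) ℂ}
    (hU : U * Uᴴ = 1) {B : Matrix (Fin n) (Fin n) ℂ}
    {M : Matrix (Fin r ⊕ Fin (n - r)) (Fin r ⊕ Fin (n - r)) ℂ}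
    (h : Uᴴ * B * U = embedBlocks hr M) : B = blockConj hr U M := by
  have h2 : U * (Uᴴ * B * U) * Uᴴ = (U * Uᴴ) * B * (U * Uᴴ) := by
    simp only [Matrix.mul_assoc]
  rw [blockConj, ← h, h2, hU, Matrix.one_mul, Matrix.mul_one]

lemma blockConj_surjective {n r : ℕ} (hr : r ≤ n) {U : Matrix (Fin n) (Fin n) ℂ}
    (hU : U * Uᴴ = 1) : Function.Surjective (blockConj hr U) := by
  intro B
  obtain ⟨M, hM⟩ := (Matrix.reindex _ _).surjective (Uᴴ * B * U)
  exact ⟨M, (blockConj_eq_of_eq_embedBlocks hr hU hM.symm).symm⟩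

lemma mink_mul_mink (n : ℕ) : mink n * mink n = 1 := by
  rw [mink, Matrix.diagonal_mul_diagonal, ← Matrix.diagonal_one]
  congr 1
  ext i
  split_ifs <;> simp

lemma mink_conjTranspose (n : ℕ) : (mink n)ᴴ = mink n := by
  rw [mink, Matrix.diagonal_conjTranspose]
  congr 1
  ext i
  by_cases h : (i : ℕ) = 0 <;> simp [h]

/-- The m-core equations in the basis `U`, in which the metric has matrix `H`. -/
lemma isMCore_blockConj_iff {n r : ℕ} (hr : r ≤ n) {U : Matrix (Fin n) (Fin n) ℂ}
    (hU : Uᴴ * U = 1) {H : Matrix (Fin r ⊕ Fin (n - r)) (Fin r ⊕ Fin (n - r)) ℂ}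
    (hH : mink n = blockConj hr U H)
    (N Y : Matrix (Fin r ⊕ Fin (n - r)) (Fin r ⊕ Fin (n - r)) ℂ) :
    IsMCore (blockConj hr U N) (blockConj hr U Y) ↔
      N * Y * N = N ∧ N * (Y * Y) = Y ∧ H * (N * Y)ᴴ * H = N * Y := by
  simp only [IsMCore, madj, hH, pow_two, blockConj_mul hr hU, blockConj_conjTranspose,
    (blockConj_injective hr hU).eq_iff]

section Blocks

variable {m k : Type*} [Fintype m] [Fintype k] [DecidableEq m] [DecidableEq k]

/-- Necessity in block form: the existence of an m-core inverse makes `G₁` invertible. -/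
lemma isUnit_of_block {T G₁ : Matrix m m ℂ} {S G₂ : Matrix m k ℂ} {G₃ : Matrix k m ℂ}
    {G₄ : Matrix k k ℂ} (hT : IsUnit T)
    (hHH : fromBlocks G₁ G₂ G₃ G₄ * fromBlocks G₁ G₂ G₃ G₄ = 1)
    {N Y : Matrix (m ⊕ k) (m ⊕ k) ℂ} (hN : N = fromBlocks T S 0 0)
    (h1 : N * Y * N = N) (h2 : N * (Y * Y) = Y)
    (h3 : fromBlocks G₁ G₂ G₃ G₄ * (N * Y)ᴴ * fromBlocks G₁ G₂ G₃ G₄ = N * Y) :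
    IsUnit G₁ := by
  -- Multiplying by `H` on the left turns the third equation into symmetry of `H N Y`.
  replace h3 : (N * Y)ᴴ * fromBlocks G₁ G₂ G₃ G₄ =
      fromBlocks G₁ G₂ G₃ G₄ * (N * Y) := by
    conv_rhs => rw [← h3]
    rw [← Matrix.mul_assoc, ← Matrix.mul_assoc, hHH, Matrix.one_mul]
  obtain ⟨Y₁, Y₂, Y₃, Y₄, rfl⟩ : ∃ Y₁ Y₂ Y₃ Y₄, Y = fromBlocks Y₁ Y₂ Y₃ Y₄ :=
    ⟨_, _, _, _, (fromBlocks_toBlocks Y).symm⟩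
  subst hN
  rw [← fromBlocks_one] at hHH
  simp only [fromBlocks_multiply, fromBlocks_conjTranspose, fromBlocks_inj, Matrix.zero_mul,
    Matrix.mul_zero, add_zero] at h1 h2 h3 hHH
  obtain ⟨-, -, rfl, rfl⟩ := h2
  simp only [Matrix.mul_zero, add_zero, conjTranspose_zero, Matrix.zero_mul] at h1 h3
  have hTY : T * Y₁ = 1 := hT.mul_right_cancel (by rw [h1.1, Matrix.one_mul])
  rw [hTY] at h3
  have hV : G₂ = G₁ * (T * Y₂) := by simpa using h3.2.1
  have h4 : G₁ * (G₁ + T * Y₂ * G₃) = 1 := by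
    rw [Matrix.mul_add, ← Matrix.mul_assoc, ← hV]
    exact hHH.1
  exact IsUnit.of_mul_eq_one _ h4

/-- Sufficiency in block form: the explicit formula satisfies the m-core equations. -/
lemma block_formula {T G₁ : Matrix m m ℂ} {S G₂ : Matrix m k ℂ} {G₃ : Matrix k m ℂ}
    {G₄ : Matrix k k ℂ} (hT : IsUnit T) (hG₁ : IsUnit G₁)
    (hHH : fromBlocks G₁ G₂ G₃ G₄ * fromBlocks G₁ G₂ G₃ G₄ = 1)
    (hHs : (fromBlocks G₁ G₂ G₃ G₄)ᴴ = fromBlocks G₁ G₂ G₃ G₄)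
    {N Y : Matrix (m ⊕ k) (m ⊕ k) ℂ} (hN : N = fromBlocks T S 0 0)
    (hY : Y = fromBlocks (T⁻¹ * G₁⁻¹) 0 0 0 * fromBlocks G₁ G₂ G₃ G₄) :
    N * Y * N = N ∧ N * (Y * Y) = Y ∧
      fromBlocks G₁ G₂ G₃ G₄ * (N * Y)ᴴ * fromBlocks G₁ G₂ G₃ G₄ = N * Y := by
  have hTT : T * T⁻¹ = 1 := Matrix.mul_nonsing_inv _ ((Matrix.isUnit_iff_isUnit_det _).1 hT)
  have hGG : G₁⁻¹ * G₁ = 1 :=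
    Matrix.nonsing_inv_mul _ ((Matrix.isUnit_iff_isUnit_det _).1 hG₁)
  have hY' : Y = fromBlocks T⁻¹ (T⁻¹ * G₁⁻¹ * G₂) 0 0 := by
    simp [hY, fromBlocks_multiply, Matrix.mul_assoc, hGG]
  have hNY : N * Y = fromBlocks 1 (G₁⁻¹ * G₂) 0 0 := by
    simp [hN, hY', fromBlocks_multiply, Matrix.mul_assoc, hTT, ← Matrix.mul_assoc T]
  refine ⟨?_, ?_, ?_⟩
  · rw [hNY, hN]; simp [fromBlocks_multiply]
  · rw [← Matrix.mul_assoc, hNY, hY']; simp [fromBlocks_multiply]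
  · have hM : fromBlocks 1 (G₁⁻¹ * G₂) 0 0 =
        fromBlocks G₁⁻¹ 0 0 (0 : Matrix k k ℂ) * fromBlocks G₁ G₂ G₃ G₄ := by
      simp [fromBlocks_multiply, hGG]
    have hGs : G₁ᴴ = G₁ := by
      rw [fromBlocks_conjTranspose, fromBlocks_inj] at hHs
      exact hHs.1
    have hMs : (fromBlocks G₁⁻¹ 0 0 (0 : Matrix k k ℂ))ᴴ = fromBlocks G₁⁻¹ 0 0 0 := by
      simp [fromBlocks_conjTranspose, conjTranspose_nonsing_inv, hGs]
    rw [hNY, hM, conjTranspose_mul, hMs, hHs, ← Matrix.mul_assoc, hHH, Matrix.one_mul]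

end Blocks

/-- For `A = U [[T,S],[0,0]] U*` with `T` invertible and
`U* G U = [[Ĝ₁,Ĝ₂],[Ĝ₃,Ĝ₄]]`: `A` has an m-core inverse iff `Ĝ₁` is invertible,
and in that case the m-core inverse is `U [[T⁻¹Ĝ₁⁻¹,0],[0,0]] U* G`. -/
theorem mCore_exists_iff_block {n r : ℕ} (hr : r ≤ n)
    (A U : Matrix (Fin n) (Fin n) ℂ) (hU : U ∈ Matrix.unitaryGroup (Fin n) ℂ)
    (T : Matrix (Fin r) (Fin r) ℂ) (S : Matrix (Fin r) (Fin (n - r)) ℂ)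
    (G₁ : Matrix (Fin r) (Fin r) ℂ) (G₂ : Matrix (Fin r) (Fin (n - r)) ℂ)
    (G₃ : Matrix (Fin (n - r)) (Fin r) ℂ) (G₄ : Matrix (Fin (n - r)) (Fin (n - r)) ℂ)
    (hT : IsUnit T)
    (hA : A = U * embedBlocks hr (Matrix.fromBlocks T S 0 0) * Uᴴ)
    (hG : Uᴴ * mink n * U = embedBlocks hr (Matrix.fromBlocks G₁ G₂ G₃ G₄)) :
    ((∃ Y, IsMCore A Y) ↔ IsUnit G₁) ∧
      (IsUnit G₁ →
        IsMCore A (U * embedBlocks hr (Matrix.fromBlocks (T⁻¹ * G₁⁻¹) 0 0 0) * Uᴴ * mink n)) := by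
  have hU1 : Uᴴ * U = 1 := Matrix.mem_unitaryGroup_iff'.1 hU
  have hU2 : U * Uᴴ = 1 := Matrix.mem_unitaryGroup_iff.1 hU
  have hH := blockConj_eq_of_eq_embedBlocks hr hU2 hG
  have hinj := blockConj_injective hr hU1
  have hHH : fromBlocks G₁ G₂ G₃ G₄ * fromBlocks G₁ G₂ G₃ G₄ = 1 :=
    hinj (by rw [← blockConj_mul hr hU1, ← hH, mink_mul_mink, blockConj_one hr hU2])
  have hHs : (fromBlocks G₁ G₂ G₃ G₄)ᴴ = fromBlocks G₁ G₂ G₃ G₄ :=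
    hinj (by rw [← blockConj_conjTranspose, ← hH, mink_conjTranspose])
  have hA' : A = blockConj hr U (fromBlocks T S 0 0) := hA
  have hsuff : IsUnit G₁ → IsMCore A
      (U * embedBlocks hr (Matrix.fromBlocks (T⁻¹ * G₁⁻¹) 0 0 0) * Uᴴ * mink n) := by
    intro hG₁
    change IsMCore A (blockConj hr U (Matrix.fromBlocks (T⁻¹ * G₁⁻¹) 0 0 0) * mink n)
    have hY : blockConj hr U (fromBlocks (T⁻¹ * G₁⁻¹) 0 0 0) * mink n =
        blockConj hr U (fromBlocks (T⁻¹ * G₁⁻¹) 0 0 0 * fromBlocks G₁ G₂ G₃ G₄) := by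
      rw [hH, blockConj_mul hr hU1]
    rw [hY, hA', isMCore_blockConj_iff hr hU1 hH]
    exact block_formula hT hG₁ hHH hHs rfl rfl
  refine ⟨⟨?_, fun h => ⟨_, hsuff h⟩⟩, hsuff⟩
  rintro ⟨Y, hY⟩
  obtain ⟨Y, rfl⟩ := blockConj_surjective hr hU2 Y
  rw [hA', isMCore_blockConj_iff hr hU1 hH] at hY
  exact isUnit_of_block hT hHH rfl hY.1 hY.2.1 hY.2.2
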